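/- For each N ∈ {2, 3, 4, 5}, there exists x = (x₁,x₂,x₃) ∈ ℝ³ such that the 6×6 real matrix T_N(x) is positive definite. -/

import Mathlib

open Matrix

noncomputable section

/-- `a = 2^{-N}` -/
def a (N : ℕ) : ℝ := (2 : ℝ)⁻¹ ^ N

/-- `b = (-2)^{-N}` -/
def b (N : ℕ) : ℝ := (-2 : ℝ)⁻¹ ^ N

/-- `c = (2/3)^N` -/
def c (N : ℕ) : ℝ := (2 / 3 : ℝ) ^ N

def M1 (N : ℕ) : Matrix (Fin 3) (Fin 3) ℝ :=
  !![1, a N, a N; a N, 1, b N; a N, b N, 1]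

def δ1 (N : ℕ) : Matrix (Fin 3) (Fin 3) ℝ :=
  !![0, a N, a N; a N, (a N) ^ 2, (a N) ^ 2; a N, (a N) ^ 2, (a N) ^ 2]

def δ2 (N : ℕ) : Matrix (Fin 3) (Fin 3) ℝ :=
  !![(a N) ^ 2, a N, a N * b N; a N, 0, b N; a N * b N, b N, (b N) ^ 2]

def δ3 (N : ℕ) : Matrix (Fin 3) (Fin 3) ℝ :=
  !![(a N) ^ 2, a N * b N, a N; a N * b N, (b N) ^ 2, b N; a N, b N, 0]

def Mx (N : ℕ) : Matrix (Fin 3) (Fin 3) ℝ :=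
  (Real.sqrt 3 * c N) • (!![0, 0, 0; 0, -1, 0; 0, 0, 1] + δ3 N - δ2 N)

def Mz (N : ℕ) : Matrix (Fin 3) (Fin 3) ℝ :=
  c N • (!![-2, 0, 0; 0, 1, 0; 0, 0, 1] - (2 : ℝ) • δ1 N + δ2 N + δ3 N)

def S (x : Fin 3 → ℝ) : Matrix (Fin 3) (Fin 3) ℝ :=
  !![0, x 0, x 1; -x 0, 0, x 2; -x 1, -x 2, 0]

/-- The 6×6 Choi-matrix representation `T_N(x)` in 2×2 block form. -/
def T (N : ℕ) (x : Fin 3 → ℝ) : Matrix (Fin 3 ⊕ Fin 3) (Fin 3 ⊕ Fin 3) ℝ :=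
  Matrix.fromBlocks (M1 N + Mz N) (Mx N + S x) (Mx N - S x) (M1 N - Mz N)

end

/-!
Write `vᵢ` for the columns of `M₁`.  The matrices `δᵢ` are the rank-one matrices `vᵢ vᵢᵀ` with the
unit entry `(i, i)` removed, so `M_z` and `M_x` have the form `2c M₁ D M₁` with `D` diagonal, and
`T_N(0) = G + 2c G K G`, where `G = M₁ ⊕ M₁` and `K` is a symmetric involution composed of three
plane reflections whose mirrors are `60°` apart.

Up to a sign change of the first coordinate `M₁` is `(1 - b) 1 + b J` with `J` the all-ones matrix,
so `G` has eigenvalue `1 + 2b` on the range of an orthogonal projection `P` and `1 - b` on its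
kernel.  As the three reflections sum to zero, `P K P = 0`.  Completing the square then shows that
`G + κ G K G` is positive definite as soon as `(κ (1 - b))² < 1` and `κ² (1 - b) (1 + 2b) < 1`.
For `κ = 2c` both inequalities hold for every `N ≥ 2`, so `x = 0` works.
-/

section PosDef

open scoped ComplexOrder

variable {n 𝕜 : Type*} [Fintype n] [DecidableEq n] [RCLike 𝕜] {K P : Matrix n n 𝕜} {γ τ : ℝ}

theorem posDef_one_add_smul_involution (hK : K.IsHermitian) (hKK : K * K = 1) (hγ : γ ^ 2 < 1) :
    (1 + γ • K).PosDef := by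
  have hsq : 1 + γ • K = (1 / 2 : ℝ) •
      ((1 - γ ^ 2) • (1 : Matrix n n 𝕜) + (1 + γ • K)ᴴ * (1 + γ • K)) := by
    simp only [conjTranspose_add, conjTranspose_one, conjTranspose_smul, hK.eq, star_trivial,
      mul_add, add_mul, one_mul, mul_one, smul_mul_assoc, mul_smul_comm, hKK]
    module
  rw [hsq]
  exact ((PosDef.one.smul (sub_pos.2 hγ)).add_posSemidef
    (posSemidef_conjTranspose_mul_self _)).smul one_half_pos

theorem posSemidef_one_add_smul_involution_sub_smul_projection (hK : K.IsHermitian)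
    (hKK : K * K = 1) (hP : IsStarProjection P) (hPKP : P * K * P = 0) (hγ : γ ^ 2 < 1) :
    (1 + γ • K - (1 - γ ^ 2) • P).PosSemidef := by
  -- The correction `(1 - γ K) P` is `(1 - γ²) (1 + γ K)⁻¹ P`, as in a Schur complement.
  have hsq : 1 + γ • K - (1 - γ ^ 2) • P =
      (1 - (P - γ • (K * P)))ᴴ * (1 + γ • K) * (1 - (P - γ • (K * P))) := by
    have hPP : P * P = P := hP.isIdempotentElem
    have hPstar : Pᴴ = P := hP.isSelfAdjoint
    have hKKP : K * (K * P) = P := by rw [← mul_assoc, hKK, one_mul]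
    have hPKP' : P * (K * P) = 0 := by rw [← mul_assoc, hPKP]
    simp only [conjTranspose_sub, conjTranspose_one, conjTranspose_smul, conjTranspose_mul, hK.eq,
      hPstar, star_trivial, mul_add, add_mul, mul_sub, sub_mul, one_mul, mul_one, smul_mul_assoc,
      mul_smul_comm, mul_assoc, hPP, hKKP, hPKP', hKK, smul_zero]
    module
  rw [hsq]
  exact (posDef_one_add_smul_involution hK hKK hγ).posSemidef.conjTranspose_mul_mul_same _

theorem posDef_one_add_smul_involution_sub_smul_projection (hK : K.IsHermitian)
    (hKK : K * K = 1) (hP : IsStarProjection P) (hPKP : P * K * P = 0) (hγ : γ ^ 2 < 1)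
    (hτ : τ < 1 - γ ^ 2) : (1 + γ • K - τ • P).PosDef := by
  obtain ⟨t, ht, ht₁⟩ : ∃ t, max 0 (τ / (1 - γ ^ 2)) < t ∧ t < 1 :=
    exists_between (max_lt one_pos ((div_lt_one (sub_pos.2 hγ)).2 hτ))
  obtain ⟨ht₀, htτ⟩ := max_lt_iff.1 ht
  rw [div_lt_iff₀ (sub_pos.2 hγ)] at htτ
  have hPpos : P.PosSemidef := by
    have hPP : Pᴴ * P = P := by
      rw [show Pᴴ = P from hP.isSelfAdjoint, hP.isIdempotentElem.eq]
    exact hPP ▸ posSemidef_conjTranspose_mul_self P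
  have hcombination : 1 + γ • K - τ • P =
      (1 - t) • (1 + γ • K) + t • (1 + γ • K - (1 - γ ^ 2) • P) +
        (t * (1 - γ ^ 2) - τ) • P := by
    module
  rw [hcombination]
  exact (((posDef_one_add_smul_involution hK hKK hγ).smul (sub_pos.2 ht₁)).add_posSemidef
    ((posSemidef_one_add_smul_involution_sub_smul_projection hK hKK hP hPKP hγ).smul
      ht₀.le)).add_posSemidef (hPpos.smul (sub_nonneg.2 htτ.le))

theorem posDef_add_smul_mul_involution_mul (hK : K.IsHermitian) (hKK : K * K = 1)
    (hP : IsStarProjection P) (hPKP : P * K * P = 0) {G : Matrix n n 𝕜} {κ r s : ℝ}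
    (hG : G = r • (1 - P) + s • P) (hr : 0 < r) (hs : 0 < s) (hκr : (κ * r) ^ 2 < 1)
    (hκrs : κ ^ 2 * r * s < 1) : (G + κ • (G * K * G)).PosDef := by
  have hPP : P * P = P := hP.isIdempotentElem
  have hG_star : star G = G := by
    simp only [hG, star_add, star_smul, star_sub, star_one, hP.isSelfAdjoint.star_eq, star_trivial]
  have hG_unit : IsUnit G := by
    refine .of_mul_eq_one (r⁻¹ • (1 - P) + s⁻¹ • P) ?_
    simp only [hG, mul_add, add_mul, mul_sub, sub_mul, one_mul, mul_one, smul_mul_assoc,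
      mul_smul_comm, hPP, smul_sub]
    match_scalars <;> field_simp
    ring
  have hGPG : G * (1 - (1 - r / s) • P) * G = r • G := by
    simp only [hG, mul_add, add_mul, mul_sub, sub_mul, one_mul, mul_one, smul_mul_assoc,
      mul_smul_comm, hPP, smul_sub]
    match_scalars <;> field_simp
    ring
  have hfactor : G + κ • (G * K * G) =
      r⁻¹ • (star G * (1 + (κ * r) • K - (1 - r / s) • P) * G) := by
    rw [hG_star, add_sub_right_comm, mul_add, add_mul, hGPG, mul_smul_comm, smul_mul_assoc]
    match_scalars <;> field_simp
  have hτ : 1 - r / s < 1 - (κ * r) ^ 2 := by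
    rw [sub_lt_sub_iff_left, lt_div_iff₀ hs]
    calc
      (κ * r) ^ 2 * s = κ ^ 2 * r * s * r := by ring
      _ < r := mul_lt_of_lt_one_left hr hκrs
  rw [hfactor]
  exact ((IsUnit.posDef_star_left_conjugate_iff hG_unit).2
    (posDef_one_add_smul_involution_sub_smul_projection hK hKK hP hPKP hκr hτ)).smul (inv_pos.2 hr)

end PosDef

section BlockReflection

variable {n R : Type*} [DecidableEq n] [CommRing R]

/-- The direct sum over `i : n` of the plane reflections `!![u i, v i; v i, -u i]`, in `2 × 2` block
form. These are reflections when `u i ^ 2 + v i ^ 2 = 1`. -/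
def blockReflection (u v : n → R) : Matrix (n ⊕ n) (n ⊕ n) R :=
  fromBlocks (diagonal u) (diagonal v) (diagonal v) (-diagonal u)

theorem isHermitian_blockReflection [StarRing R] [TrivialStar R] (u v : n → R) :
    (blockReflection u v).IsHermitian :=
  .fromBlocks (isHermitian_diagonal u) (isHermitian_diagonal v) (isHermitian_diagonal u).neg

theorem blockReflection_mul_self [Fintype n] {u v : n → R} (huv : ∀ i, u i ^ 2 + v i ^ 2 = 1) :
    blockReflection u v * blockReflection u v = 1 := by
  have hdiag : (fun i ↦ u i * u i + v i * v i) = fun _ ↦ 1 := by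
    simpa only [sq] using funext huv
  simp [blockReflection, fromBlocks_multiply, hdiag, mul_comm, add_comm]

end BlockReflection

/-- The cosines of the angles `π, -π/3, π/3` of the three trine reflections. -/
noncomputable def trineCos : Fin 3 → ℝ := ![-1, 1 / 2, 1 / 2]

/-- The sines of the angles `π, -π/3, π/3` of the three trine reflections. -/
noncomputable def trineSin : Fin 3 → ℝ := ![0, -(√3 / 2), √3 / 2]

theorem trineCos_sq_add_trineSin_sq (i : Fin 3) : trineCos i ^ 2 + trineSin i ^ 2 = 1 := by
  fin_cases i <;> norm_num [trineCos, trineSin, div_pow]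

theorem sum_trineCos : ∑ i, trineCos i = 0 := by
  rw [Fin.sum_univ_three]
  change -1 + 1 / 2 + 1 / 2 = (0 : ℝ)
  norm_num

theorem sum_trineSin : ∑ i, trineSin i = 0 := by
  simp [trineSin, Fin.sum_univ_three]

theorem Mz_eq_smul_M1_mul_diagonal_mul_M1 (N : ℕ) :
    Mz N = (2 * c N) • (M1 N * diagonal trineCos * M1 N) := by
  ext i j
  rw [Matrix.smul_apply, mul_apply]
  simp only [mul_diagonal, Fin.sum_univ_three]
  fin_cases i <;> fin_cases j <;> simp [Mz, M1, δ1, δ2, δ3, trineCos] <;> ring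

theorem Mx_eq_smul_M1_mul_diagonal_mul_M1 (N : ℕ) :
    Mx N = (2 * c N) • (M1 N * diagonal trineSin * M1 N) := by
  ext i j
  rw [Matrix.smul_apply, mul_apply]
  simp only [mul_diagonal, Fin.sum_univ_three]
  fin_cases i <;> fin_cases j <;> simp [-zero_eq_mul, Mx, M1, δ2, δ3, trineSin] <;> ring

theorem T_zero_eq (N : ℕ) :
    T N 0 = fromBlocks (M1 N) 0 0 (M1 N) + (2 * c N) •
      (fromBlocks (M1 N) 0 0 (M1 N) * blockReflection trineCos trineSin *
        fromBlocks (M1 N) 0 0 (M1 N)) := by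
  have hS : S 0 = 0 := by
    ext i j
    fin_cases i <;> fin_cases j <;> simp [S]
  simp [-diagonal_neg, T, hS, blockReflection, fromBlocks_multiply, fromBlocks_smul, fromBlocks_add,
    Mz_eq_smul_M1_mul_diagonal_mul_M1, Mx_eq_smul_M1_mul_diagonal_mul_M1, sub_eq_add_neg]

section SignProjection

variable {n : Type*} [Fintype n] {d : n → ℝ}

/-- For a vector `d` of signs, the orthogonal projection `d dᵀ / n` onto the line spanned by `d`. -/
noncomputable def signProjection (d : n → ℝ) : Matrix n n ℝ :=
  (Fintype.card n : ℝ)⁻¹ • vecMulVec d d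

theorem signProjection_mul_diagonal_mul_signProjection [DecidableEq n] (hd : ∀ i, d i ^ 2 = 1)
    (w : n → ℝ) : signProjection d * diagonal w * signProjection d =
      ((Fintype.card n : ℝ)⁻¹ * ∑ i, w i) • signProjection d := by
  have hdot : (d ᵥ* diagonal w) ⬝ᵥ d = ∑ i, w i := Finset.sum_congr rfl fun i _ ↦ by
    rw [vecMul_diagonal, mul_right_comm, ← sq, hd, one_mul]
  simp only [signProjection, smul_mul_assoc, mul_smul_comm, vecMulVec_mul, vecMul_vecMulVec,
    hdot, vecMulVec_smul, smul_smul]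
  module

theorem isStarProjection_signProjection [Nonempty n] (hd : ∀ i, d i ^ 2 = 1) :
    IsStarProjection (signProjection d) := by
  classical
  constructor
  · simpa [IsIdempotentElem] using signProjection_mul_diagonal_mul_signProjection hd 1
  · simp [IsSelfAdjoint, signProjection, star_eq_conjTranspose]

theorem fromBlocks_signProjection_mul_blockReflection_mul [DecidableEq n]
    (hd : ∀ i, d i ^ 2 = 1) {u v : n → ℝ} (hu : ∑ i, u i = 0) (hv : ∑ i, v i = 0) :
    fromBlocks (signProjection d) 0 0 (signProjection d) * blockReflection u v *
      fromBlocks (signProjection d) 0 0 (signProjection d) = 0 := by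
  simp [-diagonal_neg, blockReflection, fromBlocks_multiply,
    signProjection_mul_diagonal_mul_signProjection hd, hu, hv]

end SignProjection

theorem isStarProjection_fromBlocks {m n R : Type*} [Fintype m] [Fintype n] [Semiring R]
    [StarRing R] {P : Matrix m m R} {Q : Matrix n n R} (hP : IsStarProjection P)
    (hQ : IsStarProjection Q) : IsStarProjection (fromBlocks P 0 0 Q) where
  isIdempotentElem := by
    simp [IsIdempotentElem, fromBlocks_multiply, hP.isIdempotentElem.eq, hQ.isIdempotentElem.eq]
  isSelfAdjoint :=
    IsHermitian.fromBlocks hP.isSelfAdjoint conjTranspose_zero hQ.isSelfAdjoint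

/-- The signs `d` of the single-click states for which all the overlaps in `M1 N` become equal:
`M1 N i j = d i * d j * b N` for `i ≠ j`. -/
def overlapSign (N : ℕ) : Fin 3 → ℝ := ![(-1) ^ N, 1, 1]

theorem overlapSign_sq (N : ℕ) (i : Fin 3) : overlapSign N i ^ 2 = 1 := by
  fin_cases i <;> simp [overlapSign, ← pow_mul]

theorem a_eq_neg_one_pow_mul_b (N : ℕ) : a N = (-1) ^ N * b N := by
  rw [a, b, ← mul_pow]
  norm_num

theorem M1_eq_smul_add_smul_signProjection (N : ℕ) :
    M1 N = (1 - b N) • (1 - signProjection (overlapSign N)) +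
      (1 + 2 * b N) • signProjection (overlapSign N) := by
  ext i j
  fin_cases i <;> fin_cases j <;>
    simp [M1, signProjection, overlapSign, a_eq_neg_one_pow_mul_b, ← mul_pow] <;> ring

theorem fromBlocks_M1_eq_smul_add_smul (N : ℕ) :
    fromBlocks (M1 N) 0 0 (M1 N) =
      (1 - b N) • (1 - fromBlocks (signProjection (overlapSign N)) 0 0
        (signProjection (overlapSign N))) +
      (1 + 2 * b N) • fromBlocks (signProjection (overlapSign N)) 0 0
        (signProjection (overlapSign N)) := by
  rw [M1_eq_smul_add_smul_signProjection, ← fromBlocks_one]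
  simp [-fromBlocks_one, sub_eq_add_neg, fromBlocks_neg, fromBlocks_smul, fromBlocks_add]

theorem c_pos (N : ℕ) : 0 < c N := by
  unfold c
  positivity

theorem abs_b (N : ℕ) : |b N| = 2⁻¹ ^ N := by
  rw [b, abs_pow]
  norm_num

theorem abs_b_le_of_le {m N : ℕ} (h : m ≤ N) : |b N| ≤ 2⁻¹ ^ m := by
  rw [abs_b]
  exact pow_le_pow_of_le_one (by norm_num) (by norm_num) h

theorem c_le_of_le {m N : ℕ} (h : m ≤ N) : c N ≤ (2 / 3) ^ m :=
  pow_le_pow_of_le_one (by norm_num) (by norm_num) h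

theorem abs_b_le_one_fourth {N : ℕ} (hN : 2 ≤ N) : |b N| ≤ 1 / 4 :=
  (abs_b_le_of_le hN).trans_eq (by norm_num)

theorem c_mul_one_sub_b_le_one_third {N : ℕ} (hN : 2 ≤ N) : c N * (1 - b N) ≤ 1 / 3 := by
  obtain rfl | hN₃ : 2 = N ∨ 3 ≤ N := hN.eq_or_lt
  · norm_num [c, b]
  have hb : 1 - b N ≤ 1 + 2⁻¹ ^ 3 := by
    linarith [neg_le_of_abs_le (abs_b_le_of_le hN₃)]
  calc
    c N * (1 - b N) ≤ (2 / 3) ^ 3 * (1 + 2⁻¹ ^ 3) :=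
      mul_le_mul_of_nonneg (c_le_of_le hN₃) hb (c_pos N).le (by norm_num)
    _ = 1 / 3 := by norm_num

theorem two_mul_c_mul_one_sub_b_sq_lt_one {N : ℕ} (hN : 2 ≤ N) :
    (2 * c N * (1 - b N)) ^ 2 < 1 := by
  have hb : 0 < 1 - b N := by linarith [le_of_abs_le (abs_b_le_one_fourth hN)]
  have hcb : 0 < c N * (1 - b N) := mul_pos (c_pos N) hb
  rw [sq_lt_one_iff_abs_lt_one, abs_lt]
  constructor <;> linarith [c_mul_one_sub_b_le_one_third hN]

theorem two_mul_c_sq_mul_eigenvalues_lt_one {N : ℕ} (hN : 2 ≤ N) :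
    (2 * c N) ^ 2 * (1 - b N) * (1 + 2 * b N) < 1 := by
  obtain ⟨hb_lower, hb_upper⟩ := abs_le.1 (abs_b_le_one_fourth hN)
  calc
    (2 * c N) ^ 2 * (1 - b N) * (1 + 2 * b N)
        = 4 * (c N * (1 - b N)) * (c N * (1 + 2 * b N)) := by ring
    _ ≤ 4 * (1 / 3) * ((2 / 3) ^ 2 * (3 / 2)) := by
      gcongr
      · exact mul_nonneg (c_pos N).le (by linarith)
      · exact c_mul_one_sub_b_le_one_third hN
      · linarith
      · exact c_le_of_le hN
      · linarith
    _ < 1 := by norm_num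

theorem stmt_2_general {N : ℕ} (hN : 2 ≤ N) : (T N 0).PosDef := by
  obtain ⟨hb_lower, hb_upper⟩ := abs_le.1 (abs_b_le_one_fourth hN)
  have hQ := isStarProjection_signProjection (overlapSign_sq N)
  rw [T_zero_eq]
  exact posDef_add_smul_mul_involution_mul (isHermitian_blockReflection _ _)
    (blockReflection_mul_self trineCos_sq_add_trineSin_sq) (isStarProjection_fromBlocks hQ hQ)
    (fromBlocks_signProjection_mul_blockReflection_mul (overlapSign_sq N) sum_trineCos sum_trineSin)
    (fromBlocks_M1_eq_smul_add_smul N) (by linarith) (by linarith)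
    (two_mul_c_mul_one_sub_b_sq_lt_one hN)
    (two_mul_c_sq_mul_eigenvalues_lt_one hN)

theorem stmt_2 (N : ℕ) (hN : N ∈ ({2, 3, 4, 5} : Set ℕ)) :
    ∃ x : Fin 3 → ℝ, (T N x).PosDef :=
  ⟨0, stmt_2_general (by rcases hN with rfl | rfl | rfl | rfl <;> norm_num)⟩
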